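/- The infinite series identity 6√2 = Σ_{k=0}^{∞} (-1/4)^k · [(1/8)_k (5/8)_k (3/4)_k] / [(7/8)_k (1)_k (11/8)_k] · (40k + 9) holds, where the sum is over natural numbers k and all quantities are real numbers. -/

import Mathlib

noncomputable def risingFactorial (a : ℝ) (k : ℕ) : ℝ := ∏ i ∈ Finset.range k, (a + i)

/-- auxiliary integrals -/
noncomputable def auxI (m : ℕ) : ℝ := ∫ u in (0:ℝ)..1, u ^ m * Real.sqrt (1 - u ^ 4)

lemma rf_zero (a : ℝ) : risingFactorial a 0 = 1 := by simp [risingFactorial]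

lemma rf_succ (a : ℝ) (k : ℕ) : risingFactorial a (k+1) = risingFactorial a k * (a + k) := by
  simp [risingFactorial, Finset.prod_range_succ]

lemma rf_pos (a : ℝ) (ha : 0 < a) (k : ℕ) : 0 < risingFactorial a k := by
  unfold risingFactorial
  exact Finset.prod_pos fun i _ => by positivity

lemma rf_one (k : ℕ) : risingFactorial 1 k = (k.factorial : ℝ) := by
  induction k with
  | zero => simp [rf_zero]
  | succ k ih => rw [rf_succ, ih, Nat.factorial_succ]; push_cast; ring

lemma rf_asc (a : ℝ) (k : ℕ) : risingFactorial a k = (ascPochhammer ℝ k).eval a := by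
  induction k with
  | zero => simp [rf_zero]
  | succ k ih => rw [rf_succ, ih, ascPochhammer_succ_eval]

lemma choose_rf (a : ℝ) (k : ℕ) :
    Ring.choose (a + k - 1) k = risingFactorial a k / risingFactorial 1 k := by
  rw [← Ring.multichoose_eq, rf_asc, rf_one]
  have h := Ring.factorial_nsmul_multichoose_eq_ascPochhammer a k
  rw [Polynomial.ascPochhammer_smeval_eq_eval, nsmul_eq_mul] at h
  rw [← h]
  field_simp

lemma binom_hasSum (a x : ℝ) (hx : |x| < 1) :
    HasSum (fun k : ℕ => risingFactorial a k / risingFactorial 1 k * x ^ k) (1 / (1 - x) ^ a) := by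
  have h := (Real.one_div_one_sub_rpow_hasFPowerSeriesOnBall_zero a).hasSum (y := x)
    (by simpa [enorm_eq_nnnorm, ← NNReal.coe_lt_coe] using hx)
  simp only [zero_add] at h
  have e : (fun k : ℕ => risingFactorial a k / risingFactorial 1 k * x ^ k) = fun n =>
      (FormalMultilinearSeries.ofScalars ℝ (fun n : ℕ => Ring.choose (a + n - 1) n) n) fun _ => x := by
    funext k
    rw [← choose_rf]
    simp [mul_comm]
  rw [e]
  exact h

lemma auxI_rec (m : ℕ) : ((m:ℝ) + 7) * auxI (m+4) = (m + 1) * auxI m := by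
  have key : ∫ u in (0:ℝ)..1, (((m:ℝ) + 1) * (u ^ m * Real.sqrt (1 - u ^ 4)) -
      ((m:ℝ) + 7) * (u ^ (m+4) * Real.sqrt (1 - u ^ 4))) = 0 := by
    rw [intervalIntegral.integral_eq_sub_of_hasDerivAt_of_le (f := fun u : ℝ => u ^ (m+1) *
      (Real.sqrt (1 - u ^ 4)) ^ 3) zero_le_one]
    · simp
    · fun_prop
    · intro u hu
      have hu4 : 0 < 1 - u ^ 4 := by
        have : u ^ 4 < 1 := pow_lt_one₀ hu.1.le hu.2 (by norm_num)
        linarith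
      have h1 : HasDerivAt (fun u : ℝ => 1 - u ^ 4) (-(4 * u ^ 3)) u := by
        simpa using (hasDerivAt_pow 4 u).const_sub 1
      have h2 := ((hasDerivAt_pow (m+1) u).mul ((h1.sqrt hu4.ne').pow 3))
      convert! h2 using 1
      have hs := Real.sq_sqrt hu4.le
      have hs0 := Real.sqrt_pos.mpr hu4
      set s := Real.sqrt (1 - u ^ 4)
      simp only [Nat.add_sub_cancel, Pi.pow_apply]
      change _ = _ * s ^ 3 + _
      push_cast
      field_simp
      linear_combination (-2 * (m + 1) * u ^ m) * hs
    · apply Continuous.intervalIntegrable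
      fun_prop
  rw [intervalIntegral.integral_sub, intervalIntegral.integral_const_mul,
    intervalIntegral.integral_const_mul] at key
  · unfold auxI; linarith
  · apply Continuous.intervalIntegrable; fun_prop
  · apply Continuous.intervalIntegrable; fun_prop

lemma auxI_eq (k : ℕ) : auxI (8 * k) =
    (risingFactorial (1/8) k * risingFactorial (5/8) k) /
      (risingFactorial (7/8) k * risingFactorial (11/8) k) * auxI 0 := by
  induction k with
  | zero => simp [rf_zero]
  | succ k ih =>
    have h1 := auxI_rec (8*k)
    have h2 := auxI_rec (8*k+4)
    have p1 := rf_pos (7/8) (by norm_num) k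
    have p2 := rf_pos (11/8) (by norm_num) k
    have e1 : auxI (8*k+4) = (8*k+1)/(8*k+7) * auxI (8*k) := by
      push_cast at h1; field_simp; linarith
    have e2 : auxI (8*(k+1)) = (8*k+5)/(8*k+11) * auxI (8*k+4) := by
      rw [show 8*(k+1) = 8*k+4+4 by ring]
      push_cast at h2; field_simp; linarith
    rw [e2, e1, ih, rf_succ, rf_succ, rf_succ, rf_succ]
    field_simp
    ring

lemma auxI_pos : 0 < auxI 0 := by
  unfold auxI
  apply intervalIntegral.intervalIntegral_pos_of_pos_on
  · apply Continuous.intervalIntegrable; fun_prop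
  · intro u hu
    have : u ^ 4 < 1 := pow_lt_one₀ hu.1.le hu.2 (by norm_num)
    have : 0 < Real.sqrt (1 - u ^ 4) := Real.sqrt_pos.mpr (by linarith)
    simpa using this
  · norm_num

noncomputable def auxF (u : ℝ) : ℝ := Real.sqrt (1 - u ^ 4) *
  (30 * (1 / (1 - (-u ^ 8 / 4)) ^ (7/4 : ℝ)) - 21 * (1 / (1 - (-u ^ 8 / 4)) ^ (3/4 : ℝ)))

lemma rf_shift (k : ℕ) : 3 * risingFactorial (7/4) k = (4 * k + 3) * risingFactorial (3/4) k := by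
  induction k with
  | zero => simp [rf_zero]
  | succ k ih =>
    rw [rf_succ, rf_succ]
    push_cast
    linear_combination (7/4 + (k:ℝ)) * ih

lemma rf_le (k : ℕ) : risingFactorial (3/4) k ≤ risingFactorial 1 k := by
  unfold risingFactorial
  apply Finset.prod_le_prod
  · intro i _; positivity
  · intro i _; linarith

noncomputable def auxC (k : ℕ) : ℝ :=
  (-1/4) ^ k * (risingFactorial (3/4) k / risingFactorial 1 k) * (40 * k + 9)

lemma auxF_hasSum (u : ℝ) (hu : 0 ≤ u) (hu1 : u ≤ 1) :
    HasSum (fun k => auxC k * (u ^ (8 * k) * Real.sqrt (1 - u ^ 4))) (auxF u) := by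
  have h8 : u ^ 8 ≤ 1 := pow_le_one₀ hu hu1
  have h80 : 0 ≤ u ^ 8 := by positivity
  have hx : |(-u ^ 8 / 4)| < 1 := by rw [abs_lt]; constructor <;> linarith
  have := ((((binom_hasSum (7/4) _ hx).mul_left 30).sub ((binom_hasSum (3/4) _ hx).mul_left 21))).mul_left
    (Real.sqrt (1 - u ^ 4))
  convert! this using 1
  ext k
  have h1 := rf_shift k
  have e : (-u ^ 8 / 4) ^ k = (-1/4) ^ k * u ^ (8 * k) := by
    rw [pow_mul, ← mul_pow]; ring
  have e2 : risingFactorial (7/4) k = (4 * k + 3) * risingFactorial (3/4) k / 3 := by linarith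
  rw [e, e2, auxC]
  ring

lemma auxC_bound (k : ℕ) : |auxC k| ≤ (1/4) ^ k * (40 * k + 9) := by
  have p1 := rf_pos (3/4) (by norm_num) k
  have p2 := rf_pos 1 (by norm_num) k
  have h : risingFactorial (3/4) k / risingFactorial 1 k ≤ 1 := (div_le_one p2).mpr (rf_le k)
  have e : |(-1/4:ℝ)| = 1/4 := by norm_num [abs_of_neg]
  rw [auxC, abs_mul, abs_mul, abs_pow, e, abs_of_pos (div_pos p1 p2),
    abs_of_nonneg (by positivity : (0:ℝ) ≤ 40 * k + 9)]
  have : (0:ℝ) ≤ (1/4) ^ k := by positivity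
  have h3 : (1/4:ℝ) ^ k * (risingFactorial (3/4) k / risingFactorial 1 k) ≤ (1/4) ^ k :=
    mul_le_of_le_one_right this h
  gcongr

lemma bound_summable : Summable (fun k : ℕ => (1/4:ℝ) ^ k * (40 * k + 9)) := by
  have h1 := (summable_pow_mul_geometric_of_norm_lt_one 1 (r := (1/4:ℝ)) (by norm_num)).mul_left 40
  have h2 := (summable_geometric_of_norm_lt_one (x := (1/4:ℝ)) (by norm_num)).mul_left 9
  refine (h1.add h2).congr fun k => ?_
  ring

lemma sum_eq_integral : HasSum (fun k => auxC k * auxI (8 * k)) (∫ u in (0:ℝ)..1, auxF u) := by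
  have := intervalIntegral.hasSum_integral_of_dominated_convergence (a := 0) (b := 1)
    (μ := MeasureTheory.volume)
    (F := fun k (u:ℝ) => auxC k * (u ^ (8 * k) * Real.sqrt (1 - u ^ 4))) (f := auxF)
    (fun k _ => (1/4:ℝ) ^ k * (40 * k + 9))
    (fun k => by apply Continuous.aestronglyMeasurable; fun_prop)
    (fun k => by
      refine Filter.Eventually.of_forall fun u hu => ?_
      rw [Set.uIoc_of_le zero_le_one] at hu
      rw [Real.norm_eq_abs, abs_mul]
      have h4 : 0 ≤ u ^ 4 := by positivity
      have a1 : |u ^ (8 * k) * Real.sqrt (1 - u ^ 4)| ≤ 1 := by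
        rw [abs_of_nonneg (mul_nonneg (pow_nonneg hu.1.le _) (Real.sqrt_nonneg _))]
        apply mul_le_one₀ (pow_le_one₀ hu.1.le hu.2) (Real.sqrt_nonneg _)
        exact Real.sqrt_le_one.mpr (by linarith)
      exact (mul_le_of_le_one_right (abs_nonneg _) a1).trans (auxC_bound k))
    (Filter.Eventually.of_forall fun u _ => bound_summable)
    (by simp)
    (Filter.Eventually.of_forall fun u hu => by
      rw [Set.uIoc_of_le zero_le_one] at hu
      exact auxF_hasSum u hu.1.le hu.2)
  simp only [intervalIntegral.integral_const_mul] at this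
  exact this

/-- `s = √(1-u^4)` -/
noncomputable def auxs (u : ℝ) : ℝ := Real.sqrt (1 - u ^ 4)
/-- `n = (4+u^8)^(1/4)` -/
noncomputable def auxn (u : ℝ) : ℝ := Real.sqrt (Real.sqrt (4 + u ^ 8))
noncomputable def auxW (u : ℝ) : ℝ := u ^ 8 - u ^ 4 + 2 + auxs u ^ 2 * auxn u ^ 2
noncomputable def auxg (u : ℝ) : ℝ := Real.sqrt (2 / auxW u)
noncomputable def auxy (u : ℝ) : ℝ := u * auxg u
noncomputable def auxy' (u : ℝ) : ℝ := auxg u * (3 * u ^ 4 + 2) / auxn u ^ 2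
noncomputable def auxh (u : ℝ) : ℝ := Real.sqrt 2 * u * auxs u ^ 3 / auxn u ^ 3 *
  (u ^ 4 * (auxn u ^ 4 + 2 * auxn u ^ 2 + 4) / (auxn u ^ 2 + 2) + u ^ 8 + 6)
noncomputable def auxR (u : ℝ) : ℝ := Real.sqrt (1 - auxy u ^ 4) * auxy' u

lemma auxs_cont : Continuous auxs := by unfold auxs; fun_prop
lemma auxn_cont : Continuous auxn := by unfold auxn; fun_prop
lemma auxn_pos (u : ℝ) : 0 < auxn u := by unfold auxn; positivity
lemma auxn_pow (u : ℝ) : auxn u ^ 4 = 4 + u ^ 8 := by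
  have h : (0:ℝ) ≤ 4 + u ^ 8 := by positivity
  unfold auxn
  rw [show 4 = 2 * 2 from rfl, pow_mul, Real.sq_sqrt (Real.sqrt_nonneg _), Real.sq_sqrt h]
lemma auxs_sq (u : ℝ) (hu : 0 ≤ u) (hu1 : u ≤ 1) : auxs u ^ 2 = 1 - u ^ 4 := by
  have : u ^ 4 ≤ 1 := pow_le_one₀ hu hu1
  unfold auxs; rw [Real.sq_sqrt]; linarith
lemma auxs_pos (u : ℝ) (hu : 0 < u) (hu1 : u < 1) : 0 < auxs u := by
  have : u ^ 4 < 1 := pow_lt_one₀ hu.le hu1 (by norm_num)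
  unfold auxs; exact Real.sqrt_pos.mpr (by linarith)
lemma auxW_pos (u : ℝ) : 0 < auxW u := by
  unfold auxW
  have : 0 ≤ auxs u ^ 2 * auxn u ^ 2 := by positivity
  nlinarith [sq_nonneg (u ^ 4 - 1/2)]
lemma auxW_cont : Continuous auxW := by
  have := auxs_cont; have := auxn_cont; unfold auxW; fun_prop
lemma auxg_cont : Continuous auxg := by
  unfold auxg
  exact (continuous_const.div auxW_cont fun u => (auxW_pos u).ne').sqrt
lemma auxg_pos (u : ℝ) : 0 < auxg u := by
  have := auxW_pos u
  unfold auxg; positivity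
lemma auxg_sq (u : ℝ) : auxg u ^ 2 = 2 / auxW u := by
  have := auxW_pos u
  unfold auxg; rw [Real.sq_sqrt]; positivity
lemma auxy_cont : Continuous auxy := by
  unfold auxy; exact continuous_id.mul auxg_cont
lemma auxy'_cont : Continuous auxy' := by
  unfold auxy'
  exact (auxg_cont.mul (by fun_prop)).div (auxn_cont.pow 2) fun u => by have := auxn_pos u; positivity
lemma auxR_cont : Continuous auxR := by
  have := auxy_cont; have := auxy'_cont
  unfold auxR; fun_prop
lemma auxh_cont : Continuous auxh := by
  have := auxs_cont; have := auxn_cont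
  unfold auxh
  refine Continuous.mul (Continuous.div (by fun_prop) (by fun_prop) ?_)
    (((Continuous.div (by fun_prop) (by fun_prop) ?_).add (by fun_prop)).add (by fun_prop))
  · intro u; have := auxn_pos u; positivity
  · intro u; have := auxn_pos u; positivity

lemma auxs_deriv (u : ℝ) (hu : 0 < u) (hu1 : u < 1) :
    HasDerivAt auxs (-(2 * u ^ 3) / auxs u) u := by
  have hu4 : 0 < 1 - u ^ 4 := by
    have : u ^ 4 < 1 := pow_lt_one₀ hu.le hu1 (by norm_num)
    linarith
  have h1 : HasDerivAt (fun u : ℝ => 1 - u ^ 4) (-(4 * u ^ 3)) u := by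
    simpa using (hasDerivAt_pow 4 u).const_sub 1
  have h2 := h1.sqrt hu4.ne'
  convert! h2 using 1
  have := auxs_pos u hu hu1
  change _ = _ / (2 * auxs u)
  field_simp
  ring

lemma auxn_deriv (u : ℝ) : HasDerivAt auxn (2 * u ^ 7 / auxn u ^ 3) u := by
  have h1 : HasDerivAt (fun u : ℝ => 4 + u ^ 8) (8 * u ^ 7) u := by
    simpa using (hasDerivAt_pow 8 u).const_add 4
  have hp : (0:ℝ) < 4 + u ^ 8 := by positivity
  have h2 := (h1.sqrt hp.ne').sqrt (Real.sqrt_pos.mpr hp).ne'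
  convert! h2 using 1
  have hn := auxn_pos u
  have e : Real.sqrt (4 + u ^ 8) = auxn u ^ 2 := by
    unfold auxn; rw [Real.sq_sqrt (Real.sqrt_nonneg _)]
  change _ = _ / (2 * auxn u)
  rw [e]
  field_simp
  ring

lemma auxy_deriv (u : ℝ) (hu : 0 < u) (hu1 : u < 1) : HasDerivAt auxy (auxy' u) u := by
  have hs := auxs_deriv u hu hu1
  have hn := auxn_deriv u
  have hs0 := auxs_pos u hu hu1
  have hn0 := auxn_pos u
  have hW0 := auxW_pos u
  have hg0 := auxg_pos u
  have hW : HasDerivAt auxW (8 * u ^ 7 - 4 * u ^ 3 - 4 * u ^ 3 * auxn u ^ 2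
      + 4 * auxs u ^ 2 * u ^ 7 / auxn u ^ 2) u := by
    have := ((((hasDerivAt_pow 8 u).sub (hasDerivAt_pow 4 u)).add_const 2).add
      ((hs.pow 2).mul (hn.pow 2)))
    convert! this using 1
    push_cast
    simp only [Pi.pow_apply]
    field_simp
    ring
  have hg := (((hasDerivAt_const u (2:ℝ)).div hW hW0.ne').sqrt (by
    have : 0 < 2 / auxW u := by positivity
    exact this.ne'))
  have hy := (hasDerivAt_id u).mul hg
  convert! hy using 1
  change auxy' u = 1 * auxg u + u * (_ / (2 * auxg u))
  have key : (3 * u ^ 4 + 2) / auxn u ^ 2 = 1 - u * (8 * u ^ 7 - 4 * u ^ 3 - 4 * u ^ 3 * auxn u ^ 2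
      + 4 * auxs u ^ 2 * u ^ 7 / auxn u ^ 2) / (2 * auxW u) := by
    have h1 := auxs_sq u hu.le hu1.le
    have h2 := auxn_pow u
    field_simp
    rw [auxW, h1]
    linear_combination (-(2 * (1 - u ^ 4) + 4 * u ^ 4)) * h2
  have hgs := auxg_sq u
  have hgs' : auxg u ^ 2 * auxW u = 2 := by rw [hgs]; field_simp
  rw [auxy', mul_div_assoc, key]
  generalize 8 * u ^ 7 - 4 * u ^ 3 - 4 * u ^ 3 * auxn u ^ 2
      + 4 * auxs u ^ 2 * u ^ 7 / auxn u ^ 2 = D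
  field_simp
  linear_combination (-u * D) * hgs'

lemma sqrt_y (u : ℝ) (hu : 0 ≤ u) (hu1 : u ≤ 1) :
    Real.sqrt (1 - auxy u ^ 4) = auxg u * auxs u * auxn u := by
  have hs0 : 0 ≤ auxs u := Real.sqrt_nonneg _
  have hn0 := auxn_pos u
  have hW0 := auxW_pos u
  have hg0 := auxg_pos u
  have main : 1 - auxy u ^ 4 = auxg u * auxs u * auxn u * (auxg u * auxs u * auxn u) := by
    have hgs := auxg_sq u
    have h1 := auxs_sq u hu hu1
    have h2 := auxn_pow u
    have e : auxy u ^ 4 = u ^ 4 * (auxg u ^ 2) ^ 2 := by unfold auxy; ring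
    have e2 : auxg u * auxs u * auxn u * (auxg u * auxs u * auxn u) =
      auxg u ^ 2 * (auxs u ^ 2 * auxn u ^ 2) := by ring
    rw [e, e2, hgs, h1]
    field_simp
    rw [auxW, h1]
    linear_combination (-(1 - u ^ 4) ^ 2) * h2
  rw [main, Real.sqrt_mul_self (by positivity)]

lemma auxF_eq (u : ℝ) : auxF u = auxs u *
    (30 * (8 * Real.sqrt 2 / auxn u ^ 7) - 21 * (2 * Real.sqrt 2 / auxn u ^ 3)) := by
  have hn0 := auxn_pos u
  have h2 := auxn_pow u
  have hr : Real.sqrt 2 ^ 2 = 2 := Real.sq_sqrt (by norm_num)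
  have hr0 : 0 < Real.sqrt 2 := by positivity
  have hq : 0 ≤ auxn u / Real.sqrt 2 := by positivity
  have e : 1 - (-u ^ 8 / 4) = (auxn u / Real.sqrt 2) ^ (4:ℝ) := by
    rw [show (4:ℝ) = ((4:ℕ):ℝ) by norm_num, Real.rpow_natCast, div_pow, h2,
      show Real.sqrt 2 ^ 4 = (Real.sqrt 2 ^ 2) ^ 2 by ring, hr]
    norm_num; ring
  have e7 : (1 - (-u ^ 8 / 4)) ^ (7/4:ℝ) = (auxn u / Real.sqrt 2) ^ 7 := by
    rw [e, ← Real.rpow_mul hq, ← Real.rpow_natCast]; norm_num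
  have e3 : (1 - (-u ^ 8 / 4)) ^ (3/4:ℝ) = (auxn u / Real.sqrt 2) ^ 3 := by
    rw [e, ← Real.rpow_mul hq, ← Real.rpow_natCast]; norm_num
  have r3 : Real.sqrt 2 ^ 3 = 2 * Real.sqrt 2 := by
    rw [show Real.sqrt 2 ^ 3 = Real.sqrt 2 ^ 2 * Real.sqrt 2 by ring, hr]
  have r7 : Real.sqrt 2 ^ 7 = 8 * Real.sqrt 2 := by
    rw [show Real.sqrt 2 ^ 7 = (Real.sqrt 2 ^ 2) ^ 3 * Real.sqrt 2 by ring, hr]; norm_num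
  rw [auxF, e7, e3, div_pow, div_pow, r3, r7, one_div_div, one_div_div]
  rfl

lemma auxh_deriv (u : ℝ) (hu : 0 < u) (hu1 : u < 1) :
    HasDerivAt auxh (auxF u - 6 * Real.sqrt 2 * auxR u) u := by
  have hs := auxs_deriv u hu hu1
  have hn := auxn_deriv u
  have hs0 := auxs_pos u hu hu1
  have hn0 := auxn_pos u
  have hW0 := auxW_pos u
  have h1 := auxs_sq u hu.le hu1.le
  have h2 := auxn_pow u
  have heq : auxh =ᶠ[nhds u] fun v => Real.sqrt 2 * (auxs v ^ 3 *
      (auxn v ^ 6 + v ^ 12 + 6 * v ^ 4 - 8)) / (v ^ 3 * auxn v ^ 3) := by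
    filter_upwards [lt_mem_nhds hu] with v hv
    have hnv := auxn_pos v
    have h2v := auxn_pow v
    unfold auxh
    field_simp
    linear_combination (-(auxn v ^ 4 + 2 * auxn v ^ 2 + 4) * auxs v ^ 3) * h2v
  refine HasDerivAt.congr_of_eventuallyEq ?_ heq
  clear heq
  have hd := (((hs.pow 3).mul ((((hn.pow 6).add (hasDerivAt_pow 12 u)).add
    ((hasDerivAt_pow 4 u).const_mul 6)).sub_const 8)).const_mul (Real.sqrt 2)).div
    ((hasDerivAt_pow 3 u).mul (hn.pow 3)) (by simp only [Pi.mul_apply, Pi.pow_apply]; positivity)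
  convert! hd using 1
  have eR : auxR u = auxs u * (3 * u ^ 4 + 2) / auxn u *
      ((u ^ 8 - u ^ 4 + 2 - auxs u ^ 2 * auxn u ^ 2) / (2 * u ^ 4)) := by
    have e : (u ^ 8 - u ^ 4 + 2 - auxs u ^ 2 * auxn u ^ 2) / (2 * u ^ 4) = auxg u ^ 2 := by
      rw [auxg_sq]
      field_simp
      rw [auxW, h1]
      linear_combination (-(1 - u ^ 4) ^ 2) * h2
    rw [e, auxR, sqrt_y u hu.le hu1.le, auxy']
    field_simp
  rw [eR, auxF_eq]
  push_cast
  simp only [Pi.mul_apply, Pi.pow_apply, Pi.add_apply]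
  field_simp
  have h6 : auxn u ^ 6 = auxn u ^ 2 * (4 + u ^ 8) := by rw [← h2]; ring
  rw [h6, h1, h2]
  linear_combination (6 * (4 + u ^ 8) * (3 * u ^ 4 + 2) * (1 - u ^ 4)) * h2

lemma integral_R : ∫ u in (0:ℝ)..1, auxR u = auxI 0 := by
  have h := intervalIntegral.integral_comp_mul_deriv'' (a := 0) (b := 1) (f := auxy) (f' := auxy')
    (g := fun y => Real.sqrt (1 - y ^ 4)) auxy_cont.continuousOn
    (fun x hx => by
      simp only [zero_le_one, min_eq_left, max_eq_right] at hx
      exact (auxy_deriv x hx.1 hx.2).hasDerivWithinAt) auxy'_cont.continuousOn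
      (by apply Continuous.continuousOn; fun_prop)
  have y0 : auxy 0 = 0 := by simp [auxy]
  have y1 : auxy 1 = 1 := by
    norm_num [auxy, auxg, auxW, auxs]
  rw [y0, y1] at h
  unfold auxI
  simpa [auxR] using h

lemma auxF_cont : Continuous auxF := by
  have := auxs_cont; have := auxn_cont
  rw [show auxF = _ from funext auxF_eq]
  refine auxs_cont.mul ((continuous_const.mul (Continuous.div (by fun_prop) (by fun_prop) ?_)).sub
    (continuous_const.mul (Continuous.div (by fun_prop) (by fun_prop) ?_)))
  · intro u; have := auxn_pos u; positivity
  · intro u; have := auxn_pos u; positivity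

lemma integral_F : ∫ u in (0:ℝ)..1, auxF u = 6 * Real.sqrt 2 * auxI 0 := by
  have hc := auxF_cont
  have hR := auxR_cont
  have h := intervalIntegral.integral_eq_sub_of_hasDerivAt_of_le (f := auxh)
    (f' := fun u => auxF u - 6 * Real.sqrt 2 * auxR u) zero_le_one auxh_cont.continuousOn
    (fun u hu => auxh_deriv u hu.1 hu.2)
    (by apply Continuous.intervalIntegrable; fun_prop)
  rw [intervalIntegral.integral_sub (hc.intervalIntegrable _ _)
    (Continuous.intervalIntegrable (by fun_prop) _ _),
    intervalIntegral.integral_const_mul, integral_R] at h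
  have h0 : auxh 0 = 0 := by simp [auxh]
  have h1 : auxh 1 = 0 := by simp [auxh, auxs]
  rw [h0, h1] at h
  linarith

theorem stmt_4 :
    6 * Real.sqrt 2 =
      ∑' k : ℕ, (-1/4 : ℝ) ^ k * (risingFactorial (1/8) k * risingFactorial (5/8) k * risingFactorial (3/4) k) /
        (risingFactorial (7/8) k * risingFactorial (1) k * risingFactorial (11/8) k) * (40 * (k:ℝ) + 9) := by
  have hI := auxI_pos
  have h := sum_eq_integral.div_const (auxI 0)
  rw [integral_F, mul_div_assoc, div_self hI.ne', mul_one] at h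
  rw [← h.tsum_eq]
  congr 1
  ext k
  have p1 := rf_pos (7/8) (by norm_num) k
  have p2 := rf_pos (11/8) (by norm_num) k
  have p3 := rf_pos 1 (by norm_num) k
  rw [auxI_eq, auxC]
  field_simp
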